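/- Let (M_t)_{t∈ℝ} be a family of complete metric spaces and let (μ_{st})_{s,t∈ℝ} be a local approximate flow with data ε > 0, exponents (a_i, b_i), constants C_i, and Lipschitz-control function g, and set K := 2^{1+ε} (Σ_{i=1}^{n} C_i) ζ(1+ε). Then for every s, t ∈ ℝ there exists a continuous map φ_{st} : M_t → M_s such that μ^I_{st} converges uniformly to φ_{st} as mesh(I) → 0 (i.e., for every η > 0 there is δ > 0 such that every subdivision I of the interval between s and t with mesh(I) < δ satisfies d_{st}(μ^I_{st}, φ_{st}) < η), and moreover d_{st}(μ_{st}, φ_{st}) ≤ K · g(|t−s|) · |t−s|^{1+ε}. -/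

import Mathlib

/-! The proof is the sewing argument for compositions of maps.

A chain `s, l, t` with list `l` of interior points has a composition `chainComp μ s l t` and a total
variation `chainLen s l t`. If `l` has `k ≥ 1` points and the chain has length `L`, then by
pigeonhole (`narrow_of_length`) the two gaps around some interior point add up to at most `2L / k`.
Deleting that point changes the composition by at most `g(L) (Σ C_i) (2L / k)^{1+ε}`, by the
three-point estimate and the uniform Lipschitz bound on chains (`exists_remove`). Deleting all the
points one after another and summing over `k` gives
`d(μ_{st}, μ^I_{st}) ≤ K g(L) L^{1+ε}` (`sewing`); this holds for arbitrary chains, monotone or not.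

If a chain is refined, the segments can be replaced one at a time. Applying `sewing` to each of them
gives `d(μ^I, μ^J) ≤ g(L)² K δ^ε L` for every refinement `J` of a chain `I` of mesh at most `δ`
(`refines_bound`). Any two subdivisions have a common refinement, obtained by sorting the union of
their points, so compositions along subdivisions are uniformly Cauchy as the mesh tends to zero
(`cauchy_bound`). The limit `φ` is taken along the uniform subdivisions; completeness, the uniform
limit theorem and `sewing` give its existence, continuity and distance to `μ_{st}`. -/

open scoped ENNReal

noncomputable section

/-- Extended uniform distance `sup_x edist (u x) (v x)` between two maps. -/
def unifDist {α β : Type*} [PseudoEMetricSpace β] (u v : α → β) : ℝ≥0∞ :=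
  ⨆ x, edist (u x) (v x)

/-- `h` is Lipschitz with (real) constant `K`:
`edist (h y) (h y') ≤ K * edist y y'` for all `y, y'`. -/
def LipWith {α β : Type*} [PseudoEMetricSpace α] [PseudoEMetricSpace β]
    (K : ℝ) (h : α → β) : Prop :=
  ∀ y y', edist (h y) (h y') ≤ ENNReal.ofReal K * edist y y'

/-- The composition `μ (x 0) (x 1) ∘ μ (x 1) (x 2) ∘ ⋯ ∘ μ (x (k-1)) (x k)`
of the maps `μ` along the finite chain of points `x 0, …, x k`. -/
def compAlong {P : Type*} {M : P → Type*} (μ : ∀ x y : P, M y → M x) (x : ℕ → P) :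
    ∀ k : ℕ, M (x k) → M (x 0)
  | 0 => id
  | k+1 => fun m => compAlong μ x k (μ (x k) (x (k+1)) m)

/-- Transport a map `M a → M b` along equalities of base points. -/
def castM {P : Type*} (M : P → Type*) {a b c d : P} (h1 : a = c) (h2 : b = d)
    (f : M a → M b) : M c → M d :=
  fun m => cast (congrArg M h2) (f (cast (congrArg M h1.symm) m))

/-- A subdivision `(t_0, …, t_k)` of the interval between `s` and `t`: a finite sequence
with `t_0 = s`, `t_k = t`, arranged in increasing order if `s < t` and decreasing order
if `s > t`. -/
structure Subdivision (s t : ℝ) where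
  k : ℕ
  pt : ℕ → ℝ
  k_pos : 0 < k
  first : pt 0 = s
  last : pt k = t
  mono_of_le : s ≤ t → ∀ i j, i ≤ j → j ≤ k → pt i ≤ pt j
  anti_of_ge : t ≤ s → ∀ i j, i ≤ j → j ≤ k → pt j ≤ pt i

/-- The mesh `max_{1 ≤ j ≤ k} |t_j - t_{j-1}|` of a subdivision. -/
def Subdivision.mesh {s t : ℝ} (I : Subdivision s t) : ℝ :=
  ⨆ j : Fin I.k, |I.pt (j.1 + 1) - I.pt j.1|

/-- The value `ζ(x) = Σ_{ℓ ≥ 1} ℓ^{-x}` of the Riemann zeta function at a real `x`. -/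
def zetaR (x : ℝ) : ℝ := ∑' m : ℕ, ((m : ℝ) + 1) ^ (-x)

/-- A local approximate flow on a family `(M t)` of complete metric spaces, with data
`ε > 0`, exponents `a i, b i > 0` with `a i + b i = 1 + ε`, constants `C i > 0`, and
Lipschitz-control functions `f` and `g`. -/
structure IsLocalApproxFlow {M : ℝ → Type*} [∀ t, MetricSpace (M t)]
    (μ : ∀ s t : ℝ, M t → M s) (ε : ℝ) (n : ℕ) (a b C : Fin n → ℝ)
    (f g : ℝ → ℝ) : Prop where
  continuous : ∀ s t, Continuous (μ s t)
  id_eq : ∀ t, μ t t = id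
  eps_pos : 0 < ε
  n_pos : 0 < n
  a_pos : ∀ i, 0 < a i
  b_pos : ∀ i, 0 < b i
  ab_eq : ∀ i, a i + b i = 1 + ε
  C_pos : ∀ i, 0 < C i
  f_cont : Continuous f
  f_nonneg : ∀ x, 0 ≤ f x
  f_zero : f 0 = 0
  lip : ∀ s t, LipWith (1 + f (t - s)) (μ s t)
  three_point : ∀ s t u, unifDist (μ s t) (fun x => μ s u (μ u t x)) ≤
    ENNReal.ofReal (∑ i, C i * |t - u| ^ a i * |u - s| ^ b i)
  g_mono : MonotoneOn g (Set.Ici 0)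
  g_cont : ContinuousOn g (Set.Ici 0)
  g_ge_one : ∀ x ∈ Set.Ici (0 : ℝ), 1 ≤ g x
  lip_chain : ∀ (k : ℕ) (u : ℕ → ℝ),
    LipWith (g (∑ j ∈ Finset.range k, |u (j + 1) - u j|)) (compAlong μ u k)

/-- The composition `μ^I_{st} = μ_{t_0 t_1} ∘ ⋯ ∘ μ_{t_{k-1} t_k}` along a subdivision `I`
of the interval between `s` and `t`, viewed as a map `M t → M s`. -/
def Subdivision.comp {M : ℝ → Type*} {s t : ℝ} (I : Subdivision s t)
    (μ : ∀ s t : ℝ, M t → M s) : M t → M s :=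
  castM M I.last I.first (compAlong μ I.pt I.k)

/-! ### Chains and their compositions -/

/-- The composition along the chain `s, l, t`, where `l` is the list of interior points. Keeping the
end points outside of the list makes the types `M t → M s` come out without transport. -/
def chainComp {M : ℝ → Type*} (μ : ∀ s t : ℝ, M t → M s) : ∀ (s : ℝ) (_ : List ℝ) (t : ℝ), M t → M s
  | s, [], t => μ s t
  | s, u :: l, t => fun m => μ s u (chainComp μ u l t m)

/-- The total variation of the chain `s, l, t`. -/
def chainLen : ℝ → List ℝ → ℝ → ℝ
  | s, [], t => |t - s|
  | s, u :: l, t => |u - s| + chainLen u l t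

/-- Every step of the chain `s, l, t` has length at most `δ`. -/
def MeshLe (δ : ℝ) : ℝ → List ℝ → ℝ → Prop
  | s, [], t => |t - s| ≤ δ
  | s, u :: l, t => |u - s| ≤ δ ∧ MeshLe δ u l t

/-- The list `x 1, …, x k` of interior points of the chain `x 0, …, x (k + 1)`. -/
def interiorPts (x : ℕ → ℝ) : ℕ → List ℝ
  | 0 => []
  | k + 1 => interiorPts x k ++ [x (k + 1)]

/-- The chain `s, m, t` refines the chain `s, l, t`, and each step of the latter is replaced by a
piece of `m` of length at most `δ`. -/
def Refines (δ : ℝ) : ℝ → List ℝ → ℝ → List ℝ → Prop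
  | s, [], t, m => chainLen s m t ≤ δ
  | s, u :: l, t, m => ∃ m₁ m₂, m = m₁ ++ u :: m₂ ∧ chainLen s m₁ u ≤ δ ∧ Refines δ u l t m₂

/-- Some interior point of the chain `s, l, t` has adjacent gaps adding up to at most `w`. -/
def Narrow (w : ℝ) : ℝ → List ℝ → ℝ → Prop
  | _, [], _ => False
  | s, [u], t => |u - s| + |t - u| ≤ w
  | s, u :: v :: l, t => |u - s| + |v - u| ≤ w ∨ Narrow w u (v :: l) t

/-- The points `s, l, t` lie in increasing order if `σ = 1`, in decreasing order if `σ = -1`. -/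
def Ordered (σ s : ℝ) (l : List ℝ) (t : ℝ) : Prop :=
  l.Pairwise (fun x y => σ * x ≤ σ * y) ∧ (∀ x ∈ l, σ * s ≤ σ * x ∧ σ * x ≤ σ * t) ∧ σ * s ≤ σ * t

section Chains

variable {M : ℝ → Type*} (μ : ∀ s t : ℝ, M t → M s)

theorem chainComp_append (s : ℝ) (l₁ : List ℝ) (u : ℝ) (l₂ : List ℝ) (t : ℝ) (m : M t) :
    chainComp μ s (l₁ ++ u :: l₂) t m = chainComp μ s l₁ u (chainComp μ u l₂ t m) := by
  induction l₁ generalizing s with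
  | nil => rfl
  | cons v l ih => simp only [List.cons_append, chainComp, ih]

theorem chainComp_concat (s : ℝ) (l : List ℝ) (u t : ℝ) (m : M t) :
    chainComp μ s (l ++ [u]) t m = chainComp μ s l u (μ u t m) :=
  chainComp_append μ s l u [] t m

theorem compAlong_eq (x : ℕ → ℝ) (k : ℕ) (m : M (x (k + 1))) :
    compAlong μ x (k + 1) m = chainComp μ (x 0) (interiorPts x k) (x (k + 1)) m := by
  induction k with
  | zero => rfl
  | succ k ih =>
    rw [interiorPts, chainComp_concat]
    exact ih _

theorem castM_compAlong_eq (x : ℕ → ℝ) (k : ℕ) (s t : ℝ) (h1 : x 0 = s) (h2 : x (k + 1) = t) :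
    castM M h2 h1 (compAlong μ x (k + 1)) = chainComp μ s (interiorPts x k) t := by
  subst h1 h2
  funext m
  exact compAlong_eq μ x k m

end Chains

theorem chainLen_append (s : ℝ) (l₁ : List ℝ) (u : ℝ) (l₂ : List ℝ) (t : ℝ) :
    chainLen s (l₁ ++ u :: l₂) t = chainLen s l₁ u + chainLen u l₂ t := by
  induction l₁ generalizing s with
  | nil => rfl
  | cons v l ih => simp only [List.cons_append, chainLen, ih]; ring

theorem abs_le_chainLen (s : ℝ) (l : List ℝ) (t : ℝ) : |t - s| ≤ chainLen s l t := by
  induction l generalizing s with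
  | nil => exact le_rfl
  | cons v l ih =>
    have := ih v
    have h2 := abs_add_le (t - v) (v - s)
    rw [sub_add_sub_cancel] at h2
    simp only [chainLen]; linarith

theorem chainLen_nonneg (s : ℝ) (l : List ℝ) (t : ℝ) : 0 ≤ chainLen s l t :=
  (abs_nonneg _).trans (abs_le_chainLen s l t)

theorem chainLen_interiorPts (x : ℕ → ℝ) (k : ℕ) :
    chainLen (x 0) (interiorPts x k) (x (k + 1)) =
      ∑ j ∈ Finset.range (k + 1), |x (j + 1) - x j| := by
  induction k with
  | zero => simp [chainLen, interiorPts]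
  | succ k ih =>
    rw [interiorPts, chainLen_append, ih, Finset.sum_range_succ _ (k + 1), chainLen]

theorem meshLe_append (δ s : ℝ) (l : List ℝ) (u t : ℝ) (h : MeshLe δ s l u) (h' : |t - u| ≤ δ) :
    MeshLe δ s (l ++ [u]) t := by
  induction l generalizing s with
  | nil => exact ⟨h, h'⟩
  | cons v l ih => exact ⟨h.1, ih v h.2⟩

theorem meshLe_interiorPts (δ : ℝ) (x : ℕ → ℝ) (k : ℕ)
    (h : ∀ j < k + 1, |x (j + 1) - x j| ≤ δ) :
    MeshLe δ (x 0) (interiorPts x k) (x (k + 1)) := by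
  induction k with
  | zero => exact h 0 (by omega)
  | succ k ih =>
    exact meshLe_append _ _ _ _ _ (ih fun j hj => h j (by omega)) (h (k + 1) (by omega))

theorem interiorPts_congr (x y : ℕ → ℝ) (k : ℕ) (h : ∀ i ≤ k, x i = y i) :
    interiorPts x k = interiorPts y k := by
  induction k with
  | zero => rfl
  | succ k ih => rw [interiorPts, interiorPts, ih fun i hi => h i (by omega), h _ le_rfl]

theorem mem_interiorPts (x : ℕ → ℝ) (k : ℕ) (y : ℝ) (h : y ∈ interiorPts x k) :
    ∃ i ≤ k, y = x i := by
  induction k with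
  | zero => simp [interiorPts] at h
  | succ k ih =>
    rw [interiorPts, List.mem_append, List.mem_singleton] at h
    rcases h with h | h
    · obtain ⟨i, hi, rfl⟩ := ih h
      exact ⟨i, by omega, rfl⟩
    · exact ⟨k + 1, le_rfl, h⟩

/-- Every chain arises from a sequence of points. -/
theorem exists_seq (s : ℝ) (l : List ℝ) (t : ℝ) :
    ∃ (x : ℕ → ℝ) (k : ℕ), x 0 = s ∧ x (k + 1) = t ∧ interiorPts x k = l := by
  induction l using List.reverseRecOn generalizing t with
  | nil => exact ⟨fun i => if i = 0 then s else t, 0, by simp, by simp, rfl⟩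
  | append_singleton l u ih =>
    obtain ⟨x, k, h0, h1, h2⟩ := ih u
    refine ⟨Function.update x (k + 2) t, k + 1, ?_, by simp, ?_⟩
    · rw [Function.update_of_ne (by omega), h0]
    · rw [interiorPts, Function.update_of_ne (by omega), h1]
      rw [interiorPts_congr _ x k fun i hi => Function.update_of_ne (by omega) _ _, h2]

/-! ### Monotone chains and common refinements -/

theorem ordered_interiorPts (σ : ℝ) (x : ℕ → ℝ) (k : ℕ)
    (h : ∀ i j, i ≤ j → j ≤ k + 1 → σ * x i ≤ σ * x j) :
    Ordered σ (x 0) (interiorPts x k) (x (k + 1)) := by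
  refine ⟨?_, ?_, h _ _ (by omega) le_rfl⟩
  · induction k with
    | zero => exact List.Pairwise.nil
    | succ k ih =>
      rw [interiorPts, List.pairwise_append]
      refine ⟨ih fun i j hij hj => h i j hij (by omega), List.pairwise_singleton _ _, ?_⟩
      intro y hy z hz
      obtain ⟨i, hi, rfl⟩ := mem_interiorPts _ _ _ hy
      rw [List.mem_singleton.1 hz]
      exact h _ _ (by omega) (by omega)
  · intro y hy
    obtain ⟨i, hi, rfl⟩ := mem_interiorPts _ _ _ hy
    exact ⟨h _ _ (by omega) (by omega), h _ _ (by omega) (by omega)⟩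

theorem abs_eq_of_sign {σ : ℝ} (hσ : σ = 1 ∨ σ = -1) {s t : ℝ} (h : σ * s ≤ σ * t) :
    |t - s| = σ * (t - s) := by
  rcases hσ with rfl | rfl
  · rw [abs_of_nonneg (by linarith)]; ring
  · rw [abs_of_nonpos (by linarith)]; ring

theorem Ordered.chainLen_eq {σ : ℝ} (hσ : σ = 1 ∨ σ = -1) {s : ℝ} {l : List ℝ} {t : ℝ}
    (h : Ordered σ s l t) : chainLen s l t = |t - s| := by
  rw [abs_eq_of_sign hσ h.2.2]
  induction l generalizing s with
  | nil => exact abs_eq_of_sign hσ h.2.2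
  | cons u l ih =>
    obtain ⟨h1, h2, h3⟩ := h
    rw [List.pairwise_cons] at h1
    have hu := h2 u (by simp)
    rw [chainLen, abs_eq_of_sign hσ hu.1,
      ih ⟨h1.2, fun x hx => ⟨h1.1 x hx, (h2 x (by simp [hx])).2⟩, hu.2⟩]
    ring

/-- A chain whose length is the distance of its end points refines every chain through some of its
points: by the triangle inequality, its pieces have the same property. -/
theorem refines_of_sublist {δ s : ℝ} {l : List ℝ} {t : ℝ} {m : List ℝ} (hl : MeshLe δ s l t)
    (hlm : l.Sublist m) (hm : chainLen s m t = |t - s|) : Refines δ s l t m := by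
  induction l generalizing s m with
  | nil => exact hm.le.trans hl
  | cons u l ih =>
    obtain ⟨r₁, r₂, rfl, hu, h2⟩ := List.cons_sublist_iff.1 hlm
    obtain ⟨a, b, rfl⟩ := List.append_of_mem hu
    have e : a ++ u :: b ++ r₂ = a ++ u :: (b ++ r₂) := by simp
    rw [e, chainLen_append] at hm
    have h3 := abs_le_chainLen s a u
    have h4 := abs_le_chainLen u (b ++ r₂) t
    have h5 := abs_add_le (t - u) (u - s)
    rw [sub_add_sub_cancel] at h5
    refine ⟨a, b ++ r₂, e, ?_, ih hl.2 (h2.trans (List.sublist_append_right _ _)) (by linarith)⟩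
    have := hl.1
    linarith

theorem exists_common_refinement {σ : ℝ} (hσ : σ = 1 ∨ σ = -1) {δ s t : ℝ} {l l' : List ℝ}
    (h : Ordered σ s l t) (h' : Ordered σ s l' t) (hm : MeshLe δ s l t) (hm' : MeshLe δ s l' t) :
    ∃ m, chainLen s m t = |t - s| ∧ Refines δ s l t m ∧ Refines δ s l' t m := by
  set le : ℝ → ℝ → Bool := fun x y => decide (σ * x ≤ σ * y) with hle
  have trans : ∀ a b c : ℝ, le a b = true → le b c = true → le a c = true := by
    intro a b c; simp only [hle, decide_eq_true_eq]; exact le_trans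
  have total : ∀ a b : ℝ, (le a b || le b a) = true := by
    intro a b; simpa [hle] using le_total (σ * a) (σ * b)
  have hord : Ordered σ s ((l ++ l').mergeSort le) t := by
    refine ⟨?_, ?_, h.2.2⟩
    · have := List.pairwise_mergeSort trans total (l ++ l')
      simpa [hle] using this
    · intro x hx
      rw [List.mem_mergeSort, List.mem_append] at hx
      exact hx.elim (h.2.1 x) (h'.2.1 x)
  have hlen := hord.chainLen_eq hσ
  refine ⟨_, hlen, refines_of_sublist hm ?_ hlen, refines_of_sublist hm' ?_ hlen⟩
  · exact List.sublist_mergeSort trans total (by simpa [hle] using h.1)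
      (List.sublist_append_left _ _)
  · exact List.sublist_mergeSort trans total (by simpa [hle] using h'.1)
      (List.sublist_append_right _ _)

/-! ### Removing points -/

/-- The pigeonhole step: each gap is counted at most twice among the adjacent pairs of gaps, and the
first one only once. -/
theorem lt_of_not_narrow (w s u : ℝ) (l : List ℝ) (t : ℝ) (h : ¬ Narrow w s (u :: l) t) :
    ((l.length : ℝ) + 1) * w < 2 * chainLen s (u :: l) t - |u - s| := by
  induction l generalizing s u with
  | nil =>
    simp only [Narrow, not_le] at h
    simp only [List.length_nil, chainLen]
    have := abs_nonneg (t - u)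
    push_cast; linarith
  | cons v l ih =>
    simp only [Narrow, not_or, not_le] at h
    have := ih u v h.2
    rw [chainLen, List.length_cons]
    push_cast
    linarith [h.1]

theorem narrow_of_length {L s : ℝ} {l : List ℝ} {t : ℝ} {k : ℕ} (hk : l.length = k + 1)
    (hL : chainLen s l t ≤ L) : Narrow (2 * L / (k + 1)) s l t := by
  cases l with
  | nil => simp at hk
  | cons u l =>
    by_contra hn
    have h1 := lt_of_not_narrow _ _ _ _ _ hn
    rw [List.length_cons, Nat.add_right_cancel_iff] at hk
    rw [hk, mul_div_cancel₀ _ (by positivity)] at h1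
    linarith [abs_nonneg (u - s)]

section Flow

variable {M : ℝ → Type*} [∀ t, MetricSpace (M t)] {μ : ∀ s t : ℝ, M t → M s} {ε : ℝ} {n : ℕ}
  {a b C : Fin n → ℝ} {f g : ℝ → ℝ}

theorem IsLocalApproxFlow.lip_comp (h : IsLocalApproxFlow μ ε n a b C f g) {L s : ℝ} {l : List ℝ}
    {t : ℝ} (hL : chainLen s l t ≤ L) (y z : M t) :
    edist (chainComp μ s l t y) (chainComp μ s l t z) ≤ ENNReal.ofReal (g L) * edist y z := by
  obtain ⟨x, k, rfl, rfl, rfl⟩ := exists_seq s l t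
  rw [← compAlong_eq, ← compAlong_eq]
  refine (h.lip_chain (k + 1) x y z).trans ?_
  rw [← chainLen_interiorPts]
  have h0 := chainLen_nonneg (x 0) (interiorPts x k) (x (k + 1))
  gcongr
  exact h.g_mono h0 (h0.trans hL) hL

theorem IsLocalApproxFlow.continuous_comp (h : IsLocalApproxFlow μ ε n a b C f g) (s : ℝ)
    (l : List ℝ) (t : ℝ) : Continuous (chainComp μ s l t) := by
  induction l generalizing s with
  | nil => exact h.continuous s t
  | cons u l ih => exact (h.continuous s u).comp (ih u)

theorem IsLocalApproxFlow.three_point_le (h : IsLocalApproxFlow μ ε n a b C f g) {w s t u : ℝ}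
    (hw : |u - s| + |t - u| ≤ w) (x : M t) :
    edist (μ s u (μ u t x)) (μ s t x) ≤ ENNReal.ofReal ((∑ i, C i) * w ^ (1 + ε)) := by
  rw [edist_comm]
  refine (le_iSup (fun x => edist (μ s t x) (μ s u (μ u t x))) x).trans
    ((h.three_point s t u).trans (ENNReal.ofReal_le_ofReal ?_))
  rw [Finset.sum_mul]
  refine Finset.sum_le_sum fun i _ => ?_
  have h1 := abs_nonneg (u - s)
  have h2 := abs_nonneg (t - u)
  have hw0 : 0 ≤ w := by linarith
  have hab := h.ab_eq i
  rw [← hab, Real.rpow_add_of_nonneg hw0 (h.a_pos i).le (h.b_pos i).le, ← mul_assoc]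
  have hC := (h.C_pos i).le
  have ha := (h.a_pos i).le
  have hb := (h.b_pos i).le
  gcongr <;> linarith

/-- Deleting a point with narrow adjacent gaps. The composition with an arbitrary chain `r, p, s` on
the left is what makes the induction along `l` work without multiplying Lipschitz constants. -/
theorem IsLocalApproxFlow.exists_remove (h : IsLocalApproxFlow μ ε n a b C f g) {w L s : ℝ}
    {l : List ℝ} {t : ℝ} (hn : Narrow w s l t) :
    ∃ l' : List ℝ, l'.length + 1 = l.length ∧ chainLen s l' t ≤ chainLen s l t ∧
      ∀ (r : ℝ) (p : List ℝ), chainLen r p s + chainLen s l t ≤ L → ∀ x : M t,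
        edist (chainComp μ r p s (chainComp μ s l t x)) (chainComp μ r p s (chainComp μ s l' t x)) ≤
          ENNReal.ofReal (g L) * ENNReal.ofReal ((∑ i, C i) * w ^ (1 + ε)) := by
  induction l generalizing s with
  | nil => exact hn.elim
  | cons u l ih =>
    cases l with
    | nil =>
      refine ⟨[], rfl, abs_le_chainLen s [u] t, fun r p hL x => ?_⟩
      refine (h.lip_comp (by linarith [chainLen_nonneg s [u] t]) _ _).trans ?_
      gcongr
      exact h.three_point_le hn x
    | cons v l =>
      rcases hn with hn | hn
      · refine ⟨v :: l, rfl, ?_, fun r p hL x => ?_⟩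
        · have h2 := abs_add_le (v - u) (u - s)
          rw [sub_add_sub_cancel] at h2
          simp only [chainLen]; linarith
        · refine (h.lip_comp (by linarith [chainLen_nonneg s (u :: v :: l) t]) _ _).trans ?_
          gcongr
          exact h.three_point_le hn _
      · obtain ⟨l', h1, h2, h3⟩ := ih hn
        refine ⟨u :: l', by simpa using h1, ?_, fun r p hL x => ?_⟩
        · rw [chainLen, chainLen]; linarith
        · have h4 := h3 r (p ++ [s]) (by
            rw [chainLen_append]; rw [chainLen] at hL; simp only [chainLen] at hL ⊢; linarith) x
          rw [chainComp_concat, chainComp_concat] at h4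
          exact h4

theorem IsLocalApproxFlow.sewing_sum (h : IsLocalApproxFlow μ ε n a b C f g) {L : ℝ} (k : ℕ) (s : ℝ)
    (l : List ℝ) (t : ℝ) (hk : l.length = k) (hL : chainLen s l t ≤ L) (x : M t) :
    edist (chainComp μ s l t x) (μ s t x) ≤
      ENNReal.ofReal (g L) *
        ∑ i ∈ Finset.range k, ENNReal.ofReal ((∑ i, C i) * (2 * L / (i + 1)) ^ (1 + ε)) := by
  induction k generalizing l with
  | zero =>
    rw [List.length_eq_zero_iff] at hk
    subst hk
    simp [chainComp]
  | succ k ih =>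
    obtain ⟨l', h1, h2, h3⟩ := h.exists_remove (L := L) (narrow_of_length hk hL)
    -- `μ s s = id`, so the trivial chain from `s` to `s` serves as the prefix.
    have h4 := h3 s [] (by simpa [chainLen] using hL) x
    simp only [chainComp, h.id_eq, id] at h4
    rw [Finset.sum_range_succ, mul_add, add_comm]
    exact (edist_triangle _ _ _).trans (add_le_add h4 (ih l' (by omega) (h2.trans hL)))

theorem sum_le_zetaR (hε : 0 < ε) {L : ℝ} (hL : 0 ≤ L) (k : ℕ) :
    ∑ i ∈ Finset.range k, (2 * L / ((i : ℝ) + 1)) ^ (1 + ε) ≤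
      2 ^ (1 + ε) * zetaR (1 + ε) * L ^ (1 + ε) := by
  have hs : Summable fun m : ℕ => ((m : ℝ) + 1) ^ (-(1 + ε)) := by
    have := (summable_nat_add_iff 1).2 (Real.summable_nat_rpow.2 (by linarith : -(1 + ε) < -1))
    simpa using this
  have h1 : ∀ i : ℕ, (2 * L / ((i : ℝ) + 1)) ^ (1 + ε) =
      2 ^ (1 + ε) * L ^ (1 + ε) * ((i : ℝ) + 1) ^ (-(1 + ε)) := by
    intro i
    rw [Real.div_rpow (by positivity) (by positivity), Real.mul_rpow (by norm_num) hL,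
      Real.rpow_neg (by positivity), div_eq_mul_inv]
  simp only [h1, ← Finset.mul_sum]
  rw [mul_right_comm]
  gcongr
  exact hs.sum_le_tsum _ fun i _ => by positivity

/-- The sewing estimate, for arbitrary chains of length at most `L`. -/
theorem IsLocalApproxFlow.sewing (h : IsLocalApproxFlow μ ε n a b C f g) {K : ℝ}
    (hK : K = 2 ^ (1 + ε) * (∑ i, C i) * zetaR (1 + ε)) {L s : ℝ} {l : List ℝ} {t : ℝ}
    (hL : chainLen s l t ≤ L) (x : M t) :
    edist (chainComp μ s l t x) (μ s t x) ≤ ENNReal.ofReal (K * g L * L ^ (1 + ε)) := by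
  have hL0 := (chainLen_nonneg s l t).trans hL
  have hg := h.g_ge_one L hL0
  have hC : 0 ≤ ∑ i, C i := Finset.sum_nonneg fun i _ => (h.C_pos i).le
  refine (h.sewing_sum _ s l t rfl hL x).trans ?_
  rw [← ENNReal.ofReal_sum_of_nonneg (fun i _ => by positivity),
    ← ENNReal.ofReal_mul (by linarith)]
  refine ENNReal.ofReal_le_ofReal ?_
  rw [← Finset.mul_sum]
  calc _ ≤ g L * ((∑ i, C i) * (2 ^ (1 + ε) * zetaR (1 + ε) * L ^ (1 + ε))) := by
        gcongr
        exact sum_le_zetaR h.eps_pos hL0 _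
    _ = _ := by rw [hK]; ring

/-! ### The Cauchy property -/

theorem IsLocalApproxFlow.K_nonneg (h : IsLocalApproxFlow μ ε n a b C f g) {K : ℝ}
    (hK : K = 2 ^ (1 + ε) * (∑ i, C i) * zetaR (1 + ε)) : 0 ≤ K := by
  have hC : 0 ≤ ∑ i, C i := Finset.sum_nonneg fun i _ => (h.C_pos i).le
  have hz : 0 ≤ zetaR (1 + ε) := tsum_nonneg fun i => by positivity
  rw [hK]; positivity

/-- Replacing one step `μ s t` by a chain `s, m, t` of length at most `δ`, behind a chain
`r, p, s`. -/
theorem IsLocalApproxFlow.replace_step (h : IsLocalApproxFlow μ ε n a b C f g) {K : ℝ}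
    (hK : K = 2 ^ (1 + ε) * (∑ i, C i) * zetaR (1 + ε)) {δ L r s t : ℝ} {p m : List ℝ}
    (hm : chainLen s m t ≤ δ) (hL : chainLen r p s + chainLen s m t ≤ L) (x : M t) :
    edist (chainComp μ r p s (μ s t x)) (chainComp μ r p s (chainComp μ s m t x)) ≤
      ENNReal.ofReal (g L * g L * K * δ ^ ε * chainLen s m t) := by
  have h0 := chainLen_nonneg s m t
  have h0' := chainLen_nonneg r p s
  have hL0 : 0 ≤ L := by linarith
  have hg := h.g_ge_one L hL0
  have hK0 := h.K_nonneg hK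
  have hε := h.eps_pos
  refine (h.lip_comp (L := L) (by linarith) _ _).trans ?_
  rw [edist_comm]
  refine (mul_le_mul_right (h.sewing hK le_rfl x) _).trans ?_
  rw [← ENNReal.ofReal_mul (by linarith)]
  refine ENNReal.ofReal_le_ofReal ?_
  rw [Real.rpow_add_of_nonneg h0 zero_le_one hε.le, Real.rpow_one]
  have hgm : g (chainLen s m t) ≤ g L := h.g_mono h0 hL0 (by linarith)
  have h1 : chainLen s m t ^ ε ≤ δ ^ ε := by gcongr
  calc g L * (K * g (chainLen s m t) * (chainLen s m t * chainLen s m t ^ ε))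
      ≤ g L * (K * g L * (chainLen s m t * δ ^ ε)) := by gcongr
    _ = _ := by ring

theorem IsLocalApproxFlow.refines_bound (h : IsLocalApproxFlow μ ε n a b C f g) {K : ℝ}
    (hK : K = 2 ^ (1 + ε) * (∑ i, C i) * zetaR (1 + ε)) {δ L : ℝ} (hδ : 0 ≤ δ) {r s t : ℝ}
    {p l m : List ℝ} (hm : Refines δ s l t m) (hL : chainLen r p s + chainLen s m t ≤ L)
    (x : M t) :
    edist (chainComp μ r p s (chainComp μ s l t x)) (chainComp μ r p s (chainComp μ s m t x)) ≤
      ENNReal.ofReal (g L * g L * K * δ ^ ε * chainLen s m t) := by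
  induction l generalizing s p m with
  | nil => exact h.replace_step hK hm hL x
  | cons u l ih =>
    obtain ⟨m₁, m₂, rfl, h1, h2⟩ := hm
    rw [chainLen_append] at hL ⊢
    have e0 := chainLen_nonneg r p s
    have e1 := chainLen_nonneg s m₁ u
    have e2 := chainLen_nonneg u m₂ t
    have hg := h.g_ge_one L (by rw [Set.mem_Ici]; linarith)
    have hK0 := h.K_nonneg hK
    have hA := h.replace_step hK (p := p) (r := r) (L := L) h1 (by linarith)
      (chainComp μ u l t x)
    have hB := ih (p := p ++ s :: m₁) h2 (by rw [chainLen_append]; linarith)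
    rw [chainComp_append, chainComp_append] at hB
    rw [chainComp_append, mul_add, ENNReal.ofReal_add (by positivity) (by positivity)]
    exact (edist_triangle _ _ _).trans (add_le_add hA hB)

theorem IsLocalApproxFlow.cauchy_bound (h : IsLocalApproxFlow μ ε n a b C f g) {K : ℝ}
    (hK : K = 2 ^ (1 + ε) * (∑ i, C i) * zetaR (1 + ε)) {σ : ℝ} (hσ : σ = 1 ∨ σ = -1) {δ : ℝ}
    (hδ : 0 ≤ δ) {s t : ℝ} {l l' : List ℝ} (ho : Ordered σ s l t) (ho' : Ordered σ s l' t)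
    (hm : MeshLe δ s l t) (hm' : MeshLe δ s l' t) (x : M t) :
    edist (chainComp μ s l t x) (chainComp μ s l' t x) ≤
      ENNReal.ofReal (2 * (g |t - s| * g |t - s| * K * |t - s|) * δ ^ ε) := by
  obtain ⟨m, hlen, h1, h2⟩ := exists_common_refinement hσ ho ho' hm hm'
  have hL : chainLen s [] s + chainLen s m t ≤ |t - s| := by simp [chainLen, hlen]
  have hA := h.refines_bound hK hδ h1 hL x
  have hB := h.refines_bound hK hδ h2 hL x
  simp only [chainComp, h.id_eq, id, hlen] at hA hB
  rw [edist_comm] at hB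
  refine (edist_triangle _ _ _).trans ((add_le_add hA hB).trans ?_)
  have hg := h.g_ge_one |t - s| (Set.mem_Ici.2 (abs_nonneg _))
  have hK0 := h.K_nonneg hK
  rw [← ENNReal.ofReal_add (by positivity) (by positivity)]
  exact ENNReal.ofReal_le_ofReal (by linarith)

end Flow

/-! ### Subdivisions and the limit -/

theorem exists_sign (s t : ℝ) : ∃ σ : ℝ, (σ = 1 ∨ σ = -1) ∧ σ * s ≤ σ * t := by
  rcases le_total s t with h | h
  · exact ⟨1, Or.inl rfl, by linarith⟩
  · exact ⟨-1, Or.inr rfl, by linarith⟩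

/-- A subdivision is a monotone chain with the same composition. -/
theorem Subdivision.exists_list {M : ℝ → Type*} (μ : ∀ s t : ℝ, M t → M s) {s t : ℝ}
    (I : Subdivision s t) {σ : ℝ} (hσ : σ = 1 ∨ σ = -1) (hst : σ * s ≤ σ * t) :
    ∃ l, Ordered σ s l t ∧ MeshLe I.mesh s l t ∧ I.comp μ = chainComp μ s l t := by
  have hmesh : ∀ j < I.k, |I.pt (j + 1) - I.pt j| ≤ I.mesh := fun j hj =>
    le_ciSup (f := fun j : Fin I.k => |I.pt (j.1 + 1) - I.pt j.1|)
      (Set.finite_range _).bddAbove ⟨j, hj⟩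
  have hord : ∀ i j, i ≤ j → j ≤ I.k → σ * I.pt i ≤ σ * I.pt j := by
    intro i j hij hj
    rcases hσ with rfl | rfl
    · linarith [I.mono_of_le (by linarith) i j hij hj]
    · linarith [I.anti_of_ge (by linarith) i j hij hj]
  obtain ⟨k, hk⟩ : ∃ k, I.k = k + 1 := ⟨I.k - 1, by have := I.k_pos; omega⟩
  generalize hd : I.mesh = d at *
  obtain ⟨k', x, hpos, h1, h2, h3, h4⟩ := I
  simp only at hk hmesh hord
  subst hk
  refine ⟨interiorPts x k, ?_, ?_, castM_compAlong_eq μ x k s t h1 h2⟩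
  · have := ordered_interiorPts σ x k hord
    rwa [h1, h2] at this
  · have := meshLe_interiorPts d x k hmesh
    rwa [h1, h2] at this

/-- The subdivision into `N + 1` steps of equal length. -/
theorem exists_uniform {σ s t : ℝ} (hst : σ * s ≤ σ * t) (N : ℕ) :
    ∃ l, Ordered σ s l t ∧ MeshLe (|t - s| / (N + 1)) s l t := by
  set x : ℕ → ℝ := fun i => s + i * ((t - s) / (N + 1)) with hx
  have hN : (0 : ℝ) < N + 1 := by positivity
  have h0 : x 0 = s := by simp [hx]
  have h1 : x (N + 1) = t := by simp only [hx]; push_cast; field_simp; ring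
  refine ⟨interiorPts x N, ?_, ?_⟩
  · have := ordered_interiorPts σ x N (by
      intro i j hij _
      have hij' : (i : ℝ) ≤ j := by exact_mod_cast hij
      have e : σ * x j - σ * x i = (j - i) * ((σ * t - σ * s) / (N + 1)) := by
        simp only [hx]; ring
      have : 0 ≤ σ * x j - σ * x i := by
        rw [e]
        exact mul_nonneg (by linarith) (div_nonneg (by linarith) hN.le)
      linarith)
    rwa [h0, h1] at this
  · have := meshLe_interiorPts (|t - s| / (N + 1)) x N (by
      intro j _
      have e : x (j + 1) - x j = (t - s) / (N + 1) := by
        simp only [hx]; push_cast; ring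
      rw [e, abs_div, abs_of_pos hN])
    rwa [h0, h1] at this

theorem MeshLe.mono {δ δ' s : ℝ} {l : List ℝ} {t : ℝ} (h : MeshLe δ s l t) (hd : δ ≤ δ') :
    MeshLe δ' s l t := by
  induction l generalizing s with
  | nil => exact le_trans h hd
  | cons u l ih => exact ⟨h.1.trans hd, ih h.2⟩

theorem exists_small {ε : ℝ} (hε : 0 < ε) (c : ℝ) {η : ℝ≥0∞} (hη : 0 < η) :
    ∃ δ > (0 : ℝ), ENNReal.ofReal (c * δ ^ ε) < η := by
  have hc : Continuous fun δ : ℝ => ENNReal.ofReal (c * δ ^ ε) :=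
    ENNReal.continuous_ofReal.comp
      (continuous_const.mul (Real.continuous_rpow_const hε.le))
  have h0 : (fun δ : ℝ => ENNReal.ofReal (c * δ ^ ε)) 0 < η := by
    simpa [Real.zero_rpow hε.ne'] using hη
  have h1 : ∀ᶠ δ in nhdsWithin (0 : ℝ) (Set.Ioi 0), ENNReal.ofReal (c * δ ^ ε) < η :=
    (hc.continuousAt.eventually_lt continuousAt_const h0).filter_mono nhdsWithin_le_nhds
  obtain ⟨δ, h2, h3⟩ := (h1.and self_mem_nhdsWithin).exists
  exact ⟨δ, h3, h2⟩

/-- For a local approximate flow, with `K = 2^{1+ε} (Σ_i C_i) ζ(1+ε)`: for every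
`s, t ∈ ℝ` there is a continuous map `φ_{st} : M t → M s` such that `μ^I_{st}` converges
uniformly to `φ_{st}` as `mesh I → 0`, and moreover
`d_{st}(μ_{st}, φ_{st}) ≤ K · g(|t−s|) · |t−s|^{1+ε}`. -/
theorem stmt7 {M : ℝ → Type*} [∀ t, MetricSpace (M t)] [∀ t, CompleteSpace (M t)]
    (μ : ∀ s t : ℝ, M t → M s) (ε : ℝ) (n : ℕ) (a b C : Fin n → ℝ) (f g : ℝ → ℝ)
    (h : IsLocalApproxFlow μ ε n a b C f g)
    (K : ℝ) (hK : K = 2 ^ (1 + ε) * (∑ i, C i) * zetaR (1 + ε))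
    (s t : ℝ) :
    ∃ φ : M t → M s, Continuous φ ∧
      (∀ η : ℝ≥0∞, 0 < η → ∃ δ > (0 : ℝ), ∀ I : Subdivision s t,
        I.mesh < δ → unifDist (I.comp μ) φ < η) ∧
      unifDist (μ s t) φ ≤ ENNReal.ofReal (K * g |t - s| * |t - s| ^ (1 + ε)) := by
  obtain ⟨σ, hσ, hst⟩ := exists_sign s t
  choose l ho hm using exists_uniform (σ := σ) hst
  set c := 2 * (g |t - s| * g |t - s| * K * |t - s|) with hc
  have hmesh0 : Filter.Tendsto (fun N : ℕ => |t - s| / ((N : ℝ) + 1)) Filter.atTop (nhds 0) := by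
    simpa [div_eq_mul_inv] using
      (tendsto_one_div_add_atTop_nhds_zero_nat (𝕜 := ℝ)).const_mul |t - s|
  -- A uniform subdivision with many points is close to every subdivision of small mesh.
  have key : ∀ δ > (0 : ℝ), ∀ l', Ordered σ s l' t → MeshLe δ s l' t →
      ∀ᶠ N in Filter.atTop, ∀ x : M t,
        edist (chainComp μ s l' t x) (chainComp μ s (l N) t x) ≤ ENNReal.ofReal (c * δ ^ ε) := by
    intro δ hδ l' h1 h2
    filter_upwards [hmesh0.eventually_le_const hδ] with N hN x
    exact h.cauchy_bound hK hσ hδ.le h1 (ho N) h2 ((hm N).mono hN) x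
  have hcauchy : ∀ x : M t, CauchySeq fun N => chainComp μ s (l N) t x := by
    intro x
    rw [EMetric.cauchySeq_iff']
    intro η hη
    obtain ⟨δ, hδ, hlt⟩ := exists_small h.eps_pos c hη
    obtain ⟨N, hN⟩ := (hmesh0.eventually_le_const hδ).exists_forall_of_atTop
    exact ⟨N, fun k hk => (h.cauchy_bound hK hσ hδ.le (ho k) (ho N) ((hm k).mono (hN k hk))
      ((hm N).mono (hN N le_rfl)) x).trans_lt hlt⟩
  choose φ hφ using fun x => cauchySeq_tendsto_of_complete (hcauchy x)
  have hlim : ∀ δ > (0 : ℝ), ∀ l', Ordered σ s l' t → MeshLe δ s l' t → ∀ x : M t,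
      edist (chainComp μ s l' t x) (φ x) ≤ ENNReal.ofReal (c * δ ^ ε) := by
    intro δ hδ l' h1 h2 x
    exact le_of_tendsto (tendsto_const_nhds.edist (hφ x))
      ((key δ hδ l' h1 h2).mono fun N hN => hN x)
  refine ⟨φ, ?_, ?_, ?_⟩
  · have hu : TendstoUniformly (fun N => chainComp μ s (l N) t) φ Filter.atTop := by
      rw [EMetric.tendstoUniformly_iff]
      intro η hη
      obtain ⟨δ, hδ, hlt⟩ := exists_small h.eps_pos c hη
      filter_upwards [hmesh0.eventually_le_const hδ] with N hN x
      rw [edist_comm]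
      exact (hlim δ hδ (l N) (ho N) ((hm N).mono hN) x).trans_lt hlt
    exact hu.continuous (Filter.Frequently.of_forall fun N => h.continuous_comp s (l N) t)
  · intro η hη
    obtain ⟨δ, hδ, hlt⟩ := exists_small h.eps_pos c hη
    refine ⟨δ, hδ, fun I hI => ?_⟩
    obtain ⟨l', h1, h2, h3⟩ := I.exists_list μ hσ hst
    rw [h3]
    exact (iSup_le (hlim δ hδ l' h1 (h2.mono hI.le))).trans_lt hlt
  · refine iSup_le fun x => ?_
    rw [edist_comm]
    exact le_of_tendsto ((hφ x).edist tendsto_const_nhds)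
      (Filter.Eventually.of_forall fun N => h.sewing hK ((ho N).chainLen_eq hσ).le x)
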